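/- arXiv:math/0307196 — 4 statements merged into one kernel-verified Lean document; each statement's English description precedes it below -/
import Mathlib

section
/- Let F be a field, let k < n, j, r be positive integers, let R = F[x_1,…,x_{(j+1)(n−k)k}], and let X_j be the (j+1)(n−k) × (j+1)k matrix over R whose block in block-row s and block-column t (0 ≤ s,t ≤ j) is zero for s < t and, for s ≥ t, has (a,b) entry equal to the indeterminate x_{(s−t)(n−k)k + (a−1)k + b} (a fully generic lower block Toeplitz matrix). Then for row indices 1 ≤ i_1 < … < i_r ≤ (j+1)(n−k) and column indices 1 ≤ j_1 < … < j_r ≤ (j+1)k, the minor of X_j with these rows and columns is the zero polynomial of R if and only if for some t ∈ {1,…,r} the (i_t, j_t) entry of X_j is 0 (i.e., some diagonal entry of the chosen submatrix lies in a zero block above the block diagonal). -/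
/-!
If the entry at `(ρ t, σ t)` lies above the block diagonal, then so do all selected entries weakly
above and to the right of it, and this zero block is too large for the minor to be nonzero.

Conversely, put `p = n - k` and `q = k`, and weight the position `(i, c)` by `(i * q - c * p) ^ 2`.
With `i = s * p + a` and `c = u * q + b` this is `((s - u) * p * q + a * q - b * p) ^ 2`, which
depends only on the indeterminate standing at that position, so it defines a grading of the
polynomial ring for which all entries are homogeneous. By the rearrangement inequality, the diagonal
term of the Leibniz expansion of the minor is the only one of its weight. It is therefore a
homogeneous component of the minor, and it vanishes only if a diagonal entry does.
-/

open Matrix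

def blockToeplitz {F : Type*} [Zero F] {p q : ℕ} (Fb : ℕ → Matrix (Fin p) (Fin q) F) (j : ℕ) :
    Matrix (Fin ((j + 1) * p)) (Fin ((j + 1) * q)) F :=
  Matrix.of fun i c =>
    if (c.divNat : ℕ) ≤ (i.divNat : ℕ) then
      Fb ((i.divNat : ℕ) - (c.divNat : ℕ)) i.modNat c.modNat
    else 0

noncomputable def genBlocks (F : Type*) [Field F] (nk k j : ℕ) :
    ℕ → Matrix (Fin nk) (Fin k) (MvPolynomial (Fin (j + 1) × Fin nk × Fin k) F) :=
  fun i => Matrix.of fun a b =>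
    if h : i < j + 1 then MvPolynomial.X (⟨i, h⟩, a, b) else 0

open Finset MvPolynomial

section Determinant

variable {n R : Type*} [Fintype n] [DecidableEq n] [CommRing R]

lemma det_eq_zero_of_card_lt_card_add_card {A : Matrix n n R} {s t : Finset n}
    (hA : ∀ i ∈ s, ∀ c ∈ t, A i c = 0) (hst : Fintype.card n < #s + #t) : A.det = 0 := by
  rw [det_apply]
  refine sum_eq_zero fun π _ => ?_
  have hcard : #(univ : Finset n) < #s + #(t.map π.toEmbedding) := by
    rwa [card_univ, card_map]
  obtain ⟨i, hi⟩ :=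
    inter_nonempty_of_card_lt_card_add_card (subset_univ _) (subset_univ _) hcard
  obtain ⟨his, hit⟩ := mem_inter.1 hi
  obtain ⟨c, hc, rfl⟩ := mem_map.1 hit
  have hprod : ∏ i, A (π i) i = 0 := prod_eq_zero (mem_univ c) (hA _ his c hc)
  rw [hprod, smul_zero]

lemma weightedHomogeneousComponent_det {τ M : Type*} [AddCommMonoid M] {w : τ → M}
    {A : Matrix n n (MvPolynomial τ R)} {W : n → n → M}
    (hA : ∀ i c, IsWeightedHomogeneous w (A i c) (W i c))
    (hW : ∀ π : Equiv.Perm n, ∑ i, W (π i) i = ∑ i, W i i → π = 1) :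
    weightedHomogeneousComponent w (∑ i, W i i) A.det = ∏ i, A i i := by
  have hterm (π : Equiv.Perm n) :
      IsWeightedHomogeneous w (∏ i, A (π i) i) (∑ i, W (π i) i) :=
    IsWeightedHomogeneous.prod _ _ _ fun i _ => hA (π i) i
  rw [det_apply, map_sum, sum_eq_single 1]
  · simpa using (hterm 1).weightedHomogeneousComponent_same
  · intro π _ hπ
    rw [Units.smul_def, map_zsmul,
      (hterm π).weightedHomogeneousComponent_ne _ (fun h => hπ (hW π h.symm)), smul_zero]
  · exact fun h => absurd (mem_univ _) h

end Determinant

lemma perm_eq_one_of_monovary {ι α β : Type*} [LinearOrder ι] [Finite ι] [Preorder α] [Preorder β]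
    {f : ι → α} {g : ι → β} {π : Equiv.Perm ι} (hf : StrictMono f) (hg : StrictMono g)
    (h : Monovary (f ∘ π) g) : π = 1 := by
  have hπ : Monotone π := monotone_iff_forall_lt.2 fun _ _ hab => hf.le_iff_le.1 (h (hg hab))
  exact DFunLike.coe_injective (hπ.strictMono_of_injective π.injective).eq_id

lemma perm_eq_one_of_sum_sq_sub_eq {ι α : Type*} [LinearOrder ι] [Fintype ι] [CommRing α]
    [LinearOrder α] [IsStrictOrderedRing α] {f g : ι → α} {π : Equiv.Perm ι} (hf : StrictMono f)
    (hg : StrictMono g) (h : ∑ i, (f (π i) - g i) ^ 2 = ∑ i, (f i - g i) ^ 2) : π = 1 := by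
  have hexpand (e : Equiv.Perm ι) :
      ∑ i, (f (e i) - g i) ^ 2 = ∑ i, f i ^ 2 + ∑ i, g i ^ 2 - 2 * ∑ i, f (e i) * g i := by
    rw [← Equiv.sum_comp e (fun i => f i ^ 2), mul_sum, ← sum_add_distrib, ← sum_sub_distrib]
    exact sum_congr rfl fun i _ => by ring
  have hprod : ∑ i, f (π i) * g i = ∑ i, f i * g i := by
    have hone := hexpand 1
    simp only [Equiv.Perm.one_apply] at hone
    linarith [hexpand π]
  exact perm_eq_one_of_monovary hf hg
    ((hf.monotone.monovary hg.monotone).sum_comp_perm_mul_eq_sum_mul_iff.1 hprod)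

section GenericBlockToeplitz

variable {F : Type*} [Field F] {p q j : ℕ}

lemma blockToeplitz_genBlocks_of_le {i : Fin ((j + 1) * p)} {c : Fin ((j + 1) * q)}
    (h : (c.divNat : ℕ) ≤ i.divNat) :
    blockToeplitz (genBlocks F p q j) j i c =
      X (⟨(i.divNat : ℕ) - c.divNat, by omega⟩, i.modNat, c.modNat) := by
  have hlt : (i.divNat : ℕ) - c.divNat < j + 1 := by omega
  simp only [blockToeplitz, genBlocks, of_apply, if_pos h, dif_pos hlt]

lemma blockToeplitz_genBlocks_eq_zero_iff {i : Fin ((j + 1) * p)} {c : Fin ((j + 1) * q)} :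
    blockToeplitz (genBlocks F p q j) j i c = 0 ↔ (i.divNat : ℕ) < c.divNat := by
  refine ⟨fun h => ?_, fun h => ?_⟩
  · by_contra! hle
    exact X_ne_zero _ ((blockToeplitz_genBlocks_of_le hle).symm.trans h)
  · simp only [blockToeplitz, of_apply, if_neg h.not_ge]

lemma blockToeplitz_genBlocks_eq_zero_of_le {i i' : Fin ((j + 1) * p)} {c c' : Fin ((j + 1) * q)}
    (h : blockToeplitz (genBlocks F p q j) j i c = 0) (hi : i' ≤ i) (hc : c ≤ c') :
    blockToeplitz (genBlocks F p q j) j i' c' = 0 := by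
  rw [blockToeplitz_genBlocks_eq_zero_iff] at h ⊢
  calc (i'.divNat : ℕ) ≤ i.divNat := Nat.div_le_div_right hi
    _ < c.divNat := h
    _ ≤ c'.divNat := Nat.div_le_div_right hc

/-- The weight of an indeterminate of the generic block Toeplitz matrix with blocks of size `p × q`:
the squared scaled distance `(i * q - c * p) ^ 2`, where `(i, c)` is its position in the first block
column. -/
def toeplitzWeight (p q j : ℕ) (x : Fin (j + 1) × Fin p × Fin q) : ℤ :=
  (((x.1 : ℤ) * p + x.2.1) * q - x.2.2 * p) ^ 2

lemma isWeightedHomogeneous_blockToeplitz_genBlocks (i : Fin ((j + 1) * p))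
    (c : Fin ((j + 1) * q)) :
    IsWeightedHomogeneous (toeplitzWeight p q j) (blockToeplitz (genBlocks F p q j) j i c)
      (((i : ℤ) * q - c * p) ^ 2) := by
  obtain hlt | hle := lt_or_ge (i.divNat : ℕ) (c.divNat : ℕ)
  · rw [blockToeplitz_genBlocks_eq_zero_iff.2 hlt]
    exact isWeightedHomogeneous_zero _ _ _
  · have hi : (i : ℤ) = p * (i.divNat : ℕ) + (i.modNat : ℕ) :=
      mod_cast (Nat.div_add_mod (i : ℕ) p).symm
    have hc : (c : ℤ) = q * (c.divNat : ℕ) + (c.modNat : ℕ) :=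
      mod_cast (Nat.div_add_mod (c : ℕ) q).symm
    rw [blockToeplitz_genBlocks_of_le hle]
    convert isWeightedHomogeneous_X F (toeplitzWeight p q j) _ using 1
    rw [toeplitzWeight, hi, hc]
    push_cast [Nat.cast_sub hle]
    ring

lemma weightedHomogeneousComponent_det_submatrix_blockToeplitz {ι : Type*} [LinearOrder ι]
    [Fintype ι] (hp : 0 < p) (hq : 0 < q) {ρ : ι → Fin ((j + 1) * p)}
    {σ : ι → Fin ((j + 1) * q)} (hρ : StrictMono ρ) (hσ : StrictMono σ) :
    weightedHomogeneousComponent (toeplitzWeight p q j)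
        (∑ t, ((ρ t : ℤ) * q - σ t * p) ^ 2)
        ((blockToeplitz (genBlocks F p q j) j).submatrix ρ σ).det =
      ∏ t, blockToeplitz (genBlocks F p q j) j (ρ t) (σ t) := by
  have hf : StrictMono fun t => (ρ t : ℤ) * q := fun _ _ h =>
    mul_lt_mul_of_pos_right (mod_cast hρ h) (mod_cast hq)
  have hg : StrictMono fun t => (σ t : ℤ) * p := fun _ _ h =>
    mul_lt_mul_of_pos_right (mod_cast hσ h) (mod_cast hp)
  exact weightedHomogeneousComponent_det (W := fun s t => ((ρ s : ℤ) * q - σ t * p) ^ 2)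
    (fun s t => isWeightedHomogeneous_blockToeplitz_genBlocks (ρ s) (σ t))
    fun _ h => perm_eq_one_of_sum_sq_sub_eq hf hg h

end GenericBlockToeplitz

theorem stmt3 {F : Type*} [Field F] (n k j r : ℕ) (hk : 0 < k) (hkn : k < n)
    (hj : 0 < j) (hr : 0 < r)
    (ρ : Fin r → Fin ((j + 1) * (n - k))) (σ : Fin r → Fin ((j + 1) * k))
    (hρ : StrictMono ρ) (hσ : StrictMono σ) :
    ((blockToeplitz (genBlocks F (n - k) k j) j).submatrix ρ σ).det = 0 ↔
      ∃ t : Fin r, blockToeplitz (genBlocks F (n - k) k j) j (ρ t) (σ t) = 0 := by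
  constructor
  · intro hdet
    have hdiag := weightedHomogeneousComponent_det_submatrix_blockToeplitz (F := F)
      (Nat.sub_pos_of_lt hkn) hk hρ hσ
    rw [hdet, map_zero] at hdiag
    obtain ⟨t, -, ht⟩ := prod_eq_zero_iff.1 hdiag.symm
    exact ⟨t, ht⟩
  · rintro ⟨t, ht⟩
    refine det_eq_zero_of_card_lt_card_add_card (s := Iic t) (t := Ici t) (fun i hi c hc => ?_) ?_
    · exact blockToeplitz_genBlocks_eq_zero_of_le ht (hρ.monotone (mem_Iic.1 hi))
        (hσ.monotone (mem_Ici.1 hc))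
    · rw [Fintype.card_fin, Fin.card_Iic, Fin.card_Ici]
      omega
end

section
/- Let F_0,…,F_j ∈ F^{(n−k)×k} and suppose that every entry of every F_i (0 ≤ i ≤ j) is nonzero. Then a minor M^{i_1,…,i_r}_{j_1,…,j_r} of the block Toeplitz matrix T_j is not trivially zero if and only if its indices satisfy j_t ≤ ⌈i_t/(n−k)⌉·k for all t = 1,…,r. -/
/-!
The index condition says that every diagonal entry of the `r × r` submatrix lies in the block lower
triangle. If the diagonal entry at `t` lies above it, then so does every entry in a row `≤ t` and a
column `≥ t`, and this zero block is too large for the determinant to survive.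

For the converse, spread out the rows and columns of the matrix so that every block becomes a
`(p + q) × (p + q)` square: row `i = I * p + a` moves to `x = I * (p + q) + a` and column
`c = J * q + b` to `y = J * (p + q) + b`. Then `x - y = (I - J) * (p + q) + a - b` depends only on
the indeterminate at position `(i, c)`, so we may substitute `Z ^ (x - y) ^ 2` for that
indeterminate. The permutation `π` now contributes `± Z ^ ∑ t, (x (π t) - y t) ^ 2` or `0` to the
determinant, and by the rearrangement inequality the exponent is minimal only for `π = 1`. So
nothing cancels the diagonal term.
-/

open Matrix

def indexCond (p q : ℕ) {r N M : ℕ} (ρ : Fin r → Fin N) (σ : Fin r → Fin M) : Prop :=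
  ∀ t, (σ t : ℕ) + 1 ≤ (((ρ t : ℕ) + 1 + p - 1) / p) * q

open Classical in
noncomputable def genBlocksOf {F : Type*} [Field F] {nk k : ℕ} (j : ℕ)
    (Fb : ℕ → Matrix (Fin nk) (Fin k) F) :
    ℕ → Matrix (Fin nk) (Fin k) (MvPolynomial (Fin (j + 1) × Fin nk × Fin k) F) :=
  fun i => Matrix.of fun a b =>
    if h : i < j + 1 then
      (if Fb i a b = 0 then 0 else MvPolynomial.X (⟨i, h⟩, a, b))
    else 0

section Permutations

variable {ι : Type*} [LinearOrder ι]

lemma perm_eq_one_of_monotone [Finite ι] {π : Equiv.Perm ι} (hπ : Monotone π) : π = 1 :=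
  DFunLike.coe_injective (hπ.strictMono_of_injective π.injective).eq_id

lemma sum_sq_sub_lt_sum_sq_comp_perm_sub [Fintype ι] {R : Type*} [CommRing R] [LinearOrder R]
    [IsStrictOrderedRing R] {x y : ι → R} (hx : StrictMono x) (hy : StrictMono y)
    {π : Equiv.Perm ι} (hπ : π ≠ 1) :
    ∑ i, (x i - y i) ^ 2 < ∑ i, (x (π i) - y i) ^ 2 := by
  have rearrangement : ∑ i, x (π i) * y i < ∑ i, x i * y i := by
    refine (hx.monotone.monovary hy.monotone).sum_comp_perm_mul_lt_sum_mul_iff.2 fun hxπ => hπ ?_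
    exact perm_eq_one_of_monotone <| monotone_iff_forall_lt.2 fun i k hik =>
      hx.le_iff_le.1 (hxπ (hy hik))
  have expand (f : ι → R) :
      ∑ i, (f i - y i) ^ 2 = ∑ i, f i ^ 2 - 2 * ∑ i, f i * y i + ∑ i, y i ^ 2 := by
    simp only [sub_sq, Finset.sum_add_distrib, Finset.sum_sub_distrib, Finset.mul_sum, mul_assoc]
  rw [expand x, expand fun i => x (π i), Equiv.sum_comp π fun i => x i ^ 2]
  linarith

end Permutations

section Determinants

variable {ι R : Type*} [Fintype ι] [CommRing R]

lemma det_eq_zero_of_upper_right_eq_zero [LinearOrder ι] (A : Matrix ι ι R) (t : ι)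
    (hA : ∀ s c, s ≤ t → t ≤ c → A s c = 0) : A.det = 0 := by
  -- The corner block on the indices `≤ t` still contains column `t`, which is zero there.
  rw [twoBlockTriangular_det' A (· ≤ t) fun s hs c hc => hA s c hs (not_le.1 hc).le,
    det_eq_zero_of_column_eq_zero (⟨t, le_rfl⟩ : {i // i ≤ t}) fun s => hA s t s.2 le_rfl, zero_mul]

lemma coeff_det_single [DecidableEq ι] {Γ : Type*} [AddCommMonoid Γ] (w : ι → ι → Γ)
    (c : ι → ι → R) (hw : ∀ π : Equiv.Perm ι, π ≠ 1 → ∑ i, w (π i) i ≠ ∑ i, w i i) :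
    (of fun s t => AddMonoidAlgebra.single (w s t) (c s t)).det.coeff (∑ i, w i i) =
      ∏ i, c i i := by
  simp only [det_apply, of_apply, AddMonoidAlgebra.prod_single, AddMonoidAlgebra.coeff_sum,
    AddMonoidAlgebra.coeff_smul, AddMonoidAlgebra.coeff_single, Finsupp.finsetSum_apply,
    Finsupp.smul_apply]
  rw [Finset.sum_eq_single 1]
  · simp
  · intro π _ hπ
    rw [Finsupp.single_eq_of_ne (hw π hπ).symm, smul_zero]
  · simp

end Determinants

section BlockToeplitz

lemma divNat_mono {N p : ℕ} : Monotone fun i : Fin (N * p) => (i.divNat : ℕ) :=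
  fun _ _ h => Nat.div_le_div_right h

lemma indexCond_iff_divNat_le {p q N M r : ℕ} (hp : 0 < p) (hq : 0 < q)
    (ρ : Fin r → Fin (N * p)) (σ : Fin r → Fin (M * q)) :
    indexCond p q ρ σ ↔ ∀ t, ((σ t).divNat : ℕ) ≤ ((ρ t).divNat : ℕ) := by
  refine forall_congr' fun t => ?_
  rw [Nat.add_right_comm, Nat.add_sub_cancel, Nat.add_div_right _ hp, Nat.succ_le_iff,
    ← Nat.div_lt_iff_lt_mul hq, Nat.lt_succ_iff, Fin.coe_divNat, Fin.coe_divNat]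

variable {ι : Type*} [Fintype ι] [LinearOrder ι] {p q : ℕ}

lemma divNat_le_of_det_blockToeplitz_submatrix_ne_zero {R : Type*} [CommRing R]
    {B : ℕ → Matrix (Fin p) (Fin q) R} {j : ℕ} {ρ : ι → Fin ((j + 1) * p)}
    {σ : ι → Fin ((j + 1) * q)} (hρ : Monotone ρ) (hσ : Monotone σ)
    (hdet : ((blockToeplitz B j).submatrix ρ σ).det ≠ 0) (t : ι) :
    ((σ t).divNat : ℕ) ≤ ((ρ t).divNat : ℕ) := by
  contrapose! hdet with above
  refine det_eq_zero_of_upper_right_eq_zero _ t fun s c hst htc => if_neg (not_le.2 ?_)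
  calc ((ρ s).divNat : ℕ)
    _ ≤ (ρ t).divNat := divNat_mono (hρ hst)
    _ < (σ t).divNat := above
    _ ≤ (σ c).divNat := divNat_mono (hσ htc)

/-- The position of index `i` after `d` unused positions have been inserted behind every block of
length `p`. -/
def spread {N p : ℕ} (d : ℕ) (i : Fin (N * p)) : ℤ :=
  i + (i.divNat : ℕ) * d

lemma strictMono_spread {N p : ℕ} (d : ℕ) : StrictMono (spread d : Fin (N * p) → ℤ) :=
  StrictMono.add_monotone (fun _ _ h => Int.ofNat_lt.2 h) fun _ _ h =>
    mul_le_mul_of_nonneg_right (Int.ofNat_le.2 (divNat_mono h)) (Int.natCast_nonneg d)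

lemma spread_eq_divNat_mul_add_modNat {N p : ℕ} (d : ℕ) (i : Fin (N * p)) :
    spread d i = (i.divNat : ℕ) * (p + d) + (i.modNat : ℕ) := by
  have := congrArg (Nat.cast : ℕ → ℤ) (Nat.div_add_mod (i : ℕ) p)
  rw [spread, Fin.coe_divNat, Fin.coe_modNat]
  push_cast at this ⊢
  linear_combination -this

variable {F : Type*} [Field F] {j : ℕ}

open Classical in
lemma blockToeplitz_genBlocksOf_apply (B : ℕ → Matrix (Fin p) (Fin q) F)
    (i : Fin ((j + 1) * p)) (c : Fin ((j + 1) * q)) :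
    blockToeplitz (genBlocksOf j B) j i c =
      if (c.divNat : ℕ) ≤ i.divNat ∧ B (i.divNat - c.divNat) i.modNat c.modNat ≠ 0 then
        MvPolynomial.X (⟨i.divNat - c.divNat, (Nat.sub_le _ _).trans_lt i.divNat.isLt⟩,
          i.modNat, c.modNat)
      else 0 := by
  have hlt : (i.divNat : ℕ) - c.divNat < j + 1 := (Nat.sub_le _ _).trans_lt i.divNat.isLt
  simp only [blockToeplitz, genBlocksOf, of_apply, dif_pos hlt, ite_and, ite_not]

lemma blockToeplitz_genBlocksOf_ne_zero_iff (B : ℕ → Matrix (Fin p) (Fin q) F)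
    (i : Fin ((j + 1) * p)) (c : Fin ((j + 1) * q)) :
    blockToeplitz (genBlocksOf j B) j i c ≠ 0 ↔
      (c.divNat : ℕ) ≤ i.divNat ∧ B (i.divNat - c.divNat) i.modNat c.modNat ≠ 0 := by
  classical
  rw [blockToeplitz_genBlocksOf_apply]
  exact (MvPolynomial.X_ne_zero _).ite_ne_right_iff

/-- The substitution of `Z ^ (i * (p + q) + a - b) ^ 2` for each indeterminate `X (i, a, b)`, with
`Z` a single variable. The base of the exponent is the difference of the spread row and column
positions of any occurrence of `X (i, a, b)`. The target has exponents in `ℤ`, which avoids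
absolute values. -/
noncomputable def spreadSubst (F : Type*) [Field F] (j p q : ℕ) :
    MvPolynomial (Fin (j + 1) × Fin p × Fin q) F →ₐ[F] AddMonoidAlgebra F ℤ :=
  MvPolynomial.aeval fun v =>
    AddMonoidAlgebra.single (((v.1 : ℤ) * (p + q) + (v.2.1 : ℤ) - (v.2.2 : ℤ)) ^ 2) 1

open Classical in
lemma spreadSubst_blockToeplitz (B : ℕ → Matrix (Fin p) (Fin q) F) (i : Fin ((j + 1) * p))
    (c : Fin ((j + 1) * q)) :
    spreadSubst F j p q (blockToeplitz (genBlocksOf j B) j i c) =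
      AddMonoidAlgebra.single ((spread q i - spread p c) ^ 2)
        (if blockToeplitz (genBlocksOf j B) j i c = 0 then 0 else 1) := by
  by_cases hzero : blockToeplitz (genBlocksOf j B) j i c = 0
  · rw [hzero, map_zero, if_pos rfl, AddMonoidAlgebra.single_zero]
  have hentry := (blockToeplitz_genBlocksOf_ne_zero_iff B i c).1 hzero
  rw [if_neg hzero, blockToeplitz_genBlocksOf_apply, if_pos hentry, spreadSubst,
    MvPolynomial.aeval_X, spread_eq_divNat_mul_add_modNat, spread_eq_divNat_mul_add_modNat,
    Nat.cast_sub hentry.1]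
  congr 2
  ring

lemma det_blockToeplitz_submatrix_ne_zero_of_diag_ne_zero {B : ℕ → Matrix (Fin p) (Fin q) F}
    {ρ : ι → Fin ((j + 1) * p)} {σ : ι → Fin ((j + 1) * q)}
    (hρ : StrictMono ρ) (hσ : StrictMono σ)
    (hdiag : ∀ t, blockToeplitz (genBlocksOf j B) j (ρ t) (σ t) ≠ 0) :
    ((blockToeplitz (genBlocksOf j B) j).submatrix ρ σ).det ≠ 0 := by
  classical
  let A := (blockToeplitz (genBlocksOf j B) j).submatrix ρ σ
  let x (s : ι) : ℤ := spread q (ρ s)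
  let y (t : ι) : ℤ := spread p (σ t)
  have hmap : (spreadSubst F j p q).mapMatrix A =
      of fun s t => AddMonoidAlgebra.single ((x s - y t) ^ 2) (if A s t = 0 then 0 else 1) := by
    ext1 s t
    exact spreadSubst_blockToeplitz B (ρ s) (σ t)
  have hcoeff := coeff_det_single (fun s t => (x s - y t) ^ 2)
    (fun s t => if A s t = 0 then (0 : F) else 1) fun π hπ =>
      (sum_sq_sub_lt_sum_sq_comp_perm_sub ((strictMono_spread q).comp hρ)
        ((strictMono_spread p).comp hσ) hπ).ne'
  have hprod : ∏ t, (if A t t = 0 then (0 : F) else 1) = 1 :=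
    Finset.prod_eq_one fun t _ => if_neg (hdiag t)
  intro hdet
  rw [← hmap, ← AlgHom.map_det, hdet, map_zero, hprod] at hcoeff
  exact zero_ne_one hcoeff

end BlockToeplitz

theorem stmt4 {F : Type*} [Field F] (n k j r : ℕ) (hk : 0 < k) (hkn : k < n)
    (Fb : ℕ → Matrix (Fin (n - k)) (Fin k) F)
    (hF : ∀ i ≤ j, ∀ (a : Fin (n - k)) (b : Fin k), Fb i a b ≠ 0)
    (ρ : Fin r → Fin ((j + 1) * (n - k))) (σ : Fin r → Fin ((j + 1) * k))
    (hρ : StrictMono ρ) (hσ : StrictMono σ) :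
    ((blockToeplitz (genBlocksOf j Fb) j).submatrix ρ σ).det ≠ 0 ↔
      indexCond (n - k) k ρ σ := by
  rw [indexCond_iff_divNat_le (Nat.sub_pos_of_lt hkn) hk]
  refine ⟨divNat_le_of_det_blockToeplitz_submatrix_ne_zero hρ.monotone hσ.monotone, fun hle => ?_⟩
  refine det_blockToeplitz_submatrix_ne_zero_of_diag_ne_zero hρ hσ fun t => ?_
  have hblock : ((ρ t).divNat : ℕ) - (σ t).divNat ≤ j :=
    (Nat.sub_le _ _).trans (Nat.le_of_lt_succ (ρ t).divNat.isLt)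
  exact (blockToeplitz_genBlocksOf_ne_zero_iff Fb (ρ t) (σ t)).2 ⟨hle t, hF _ hblock _ _⟩
end

section
/- Let j, k, n be fixed positive integers with k < n and let F be a finite field. Then there exists a finite field extension K of F and matrices F_0,…,F_j ∈ K^{(n−k)×k} such that every minor M^{i_1,…,i_r}_{j_1,…,j_r} of the block Toeplitz matrix T_j whose indices satisfy the index condition j_t ≤ ⌈i_t/(n−k)⌉·k for all t = 1,…,r is nonzero. -/
/-!
Replace the unknown entries by powers of one variable: over `F[X]`, let the `(a, b)` entry of the
`d`-th block be `X ^ (d n + a - b)²`, where `n` is at least the number of rows and of columns of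
a block. If the row in block `s` with offset `a` is placed at `s n + a`, and columns likewise, then
every entry of the block Toeplitz matrix is either structurally zero or `X` to the squared distance
between its row and its column.

In the Leibniz expansion of a minor, the rearrangement inequality makes the identity the unique
permutation minimising the sum of the squared distances. The index condition says exactly that no
diagonal entry of the minor is structurally zero, so the term of the identity is present and cannot
cancel: the minor is a nonzero polynomial. The finitely many nonzero minors have finitely many roots
in an algebraic closure of `F`; any other algebraic element `θ` can be substituted for `X`, with
`K = F(θ)`.
-/

open Matrix

open Polynomial

universe u v w

section Rearrangement

variable {ι : Type*} [Fintype ι] [LinearOrder ι]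
  {S : Type*} [CommRing S] [LinearOrder S] [IsStrictOrderedRing S]

lemma sum_comp_perm_mul_lt_sum_mul {x y : ι → S} (hx : StrictMono x) (hy : StrictMono y)
    {τ : Equiv.Perm ι} (hτ : τ ≠ 1) : ∑ i, x (τ i) * y i < ∑ i, x i * y i := by
  rw [(hx.monotone.monovary hy.monotone).sum_comp_perm_mul_lt_sum_mul_iff]
  intro hmonovary
  have hmono : Monotone (x ∘ τ) := by
    intro a b hab
    rcases hab.eq_or_lt with rfl | hlt
    · exact le_rfl
    · exact hmonovary (hy hlt)
  have hcomp : x ∘ τ = x :=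
    ((hmono.strictMono_of_injective (hx.injective.comp τ.injective)).range_inj hx).1
      (τ.surjective.range_comp x)
  exact hτ (Equiv.ext fun i => hx.injective (congrFun hcomp i))

lemma sum_sub_sq_lt_sum_comp_perm_sub_sq {x y : ι → S} (hx : StrictMono x) (hy : StrictMono y)
    {τ : Equiv.Perm ι} (hτ : τ ≠ 1) :
    ∑ i, (x i - y i) ^ 2 < ∑ i, (x (τ i) - y i) ^ 2 := by
  have hsq : ∑ i, x (τ i) ^ 2 = ∑ i, x i ^ 2 := Equiv.sum_comp τ (fun i => x i ^ 2)
  simp only [sub_sq, Finset.sum_add_distrib, Finset.sum_sub_distrib, hsq, mul_assoc,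
    ← Finset.mul_sum]
  linarith [sum_comp_perm_mul_lt_sum_mul hx hy hτ]

end Rearrangement

section Determinant

variable {ι : Type*} [Fintype ι] {R : Type*} [CommRing R]

lemma coeff_det_eq_one_of_X_pow [DecidableEq ι] (A : Matrix ι ι R[X]) (e : ι → ι → ℕ)
    (hA : ∀ i c, A i c = 0 ∨ A i c = X ^ e i c) (hdiag : ∀ i, A i i = X ^ e i i)
    (he : ∀ τ : Equiv.Perm ι, τ ≠ 1 → ∑ i, e i i ≠ ∑ i, e (τ i) i) :
    A.det.coeff (∑ i, e i i) = 1 := by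
  rw [Matrix.det_apply, finsetSum_coeff, Finset.sum_eq_single 1]
  · simp [hdiag, Finset.prod_pow_eq_pow_sum]
  · intro τ _ hτ
    have hcoeff : (∏ i, A (τ i) i).coeff (∑ i, e i i) = 0 := by
      by_cases hzero : ∃ i, A (τ i) i = 0
      · obtain ⟨i, hi⟩ := hzero
        rw [Finset.prod_eq_zero (f := fun i => A (τ i) i) (Finset.mem_univ i) hi, coeff_zero]
      · push Not at hzero
        rw [Finset.prod_congr rfl fun i _ => (hA (τ i) i).resolve_left (hzero i),
          Finset.prod_pow_eq_pow_sum, coeff_X_pow, if_neg (he τ hτ)]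
    rw [coeff_smul, hcoeff, smul_zero]
  · simp

lemma det_ne_zero_of_X_pow_sub_sq [Nontrivial R] [LinearOrder ι] {x y : ι → ℤ}
    (hx : StrictMono x) (hy : StrictMono y) (A : Matrix ι ι R[X])
    (hA : ∀ i c, A i c = 0 ∨ A i c = X ^ (x i - y c).natAbs ^ 2)
    (hdiag : ∀ i, A i i = X ^ (x i - y i).natAbs ^ 2) : A.det ≠ 0 := by
  have hcoeff := coeff_det_eq_one_of_X_pow A (fun i c => (x i - y c).natAbs ^ 2) hA hdiag
    fun τ hτ => ne_of_lt <| by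
      zify
      simpa only [sq_abs] using sum_sub_sq_lt_sum_comp_perm_sub_sq hx hy hτ
  intro hdet
  simp [hdet] at hcoeff

end Determinant

section Minors

variable {m n R : Type*} [Preorder m] [Preorder n] [CommRing R]

/-- The minors of a matrix, of all sizes. Order embeddings select the rows and the columns, so that
they are listed increasingly and without repetition. -/
def minors (A : Matrix m n R) : Set R :=
  {d | ∃ (r : ℕ) (ρ : Fin r ↪o m) (σ : Fin r ↪o n), (A.submatrix ρ σ).det = d}

lemma finite_minors [Finite m] [Finite n] (A : Matrix m n R) : (minors A).Finite := by
  have hm (r : ℕ) : Finite (Fin r ↪o m) := DFunLike.finite _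
  have hn (r : ℕ) : Finite (Fin r ↪o n) := DFunLike.finite _
  refine ((Set.finite_Iic (Nat.card m)).biUnion fun r _ => Set.finite_range
    fun e : (Fin r ↪o m) × (Fin r ↪o n) => (A.submatrix e.1 e.2).det).subset ?_
  rintro _ ⟨r, ρ, σ, rfl⟩
  have hr : r ≤ Nat.card m := by simpa using Finite.card_le_of_embedding ρ.toEmbedding
  exact Set.mem_biUnion hr ⟨(ρ, σ), rfl⟩

end Minors

section Extension

lemma exists_forall_aeval_ne_zero {R E : Type*} [CommRing R] [IsDomain R] [CommRing E]
    [IsDomain E] [Infinite E] [Algebra R E] [Module.IsTorsionFree R E] {S : Set R[X]}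
    (hS : S.Finite) :
    ∃ x : E, ∀ P ∈ S, P ≠ 0 → aeval x P ≠ 0 := by
  obtain ⟨x, hx⟩ := (hS.biUnion fun P _ => P.rootSet_finite E).exists_notMem
  exact ⟨x, fun P hP hP0 hroot => hx (Set.mem_biUnion hP (mem_rootSet.2 ⟨hP0, hroot⟩))⟩

lemma small_of_module_finite (R : Type u) (M : Type w) [Semiring R] [AddCommMonoid M] [Module R M]
    [Module.Finite R M] [Small.{v} R] : Small.{v} M := by
  obtain ⟨_, _, hsurj⟩ := Module.Finite.exists_fin' R M
  exact small_of_surjective hsurj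

lemma exists_finite_extension_mem_range {F : Type u} {E : Type w} [Field F] [Small.{v} F] [Field E]
    [Algebra F E] {x : E} (hx : IsIntegral F x) :
    ∃ (K : Type v) (_ : Field K) (_ : Algebra F K), Module.Finite F K ∧
      ∃ f : K →ₐ[F] E, x ∈ f.range := by
  let L := IntermediateField.adjoin F {x}
  have hfin : Module.Finite F L := IntermediateField.adjoin.finiteDimensional hx
  have hsmall : Small.{v} L := small_of_module_finite F L
  let e : Shrink.{v} L ≃ₐ[F] L := Shrink.algEquiv F L
  exact ⟨Shrink.{v} L, inferInstance, inferInstance, Module.Finite.equiv e.symm.toLinearEquiv,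
    L.val.comp e.toAlgHom, e.symm (IntermediateField.AdjoinSimple.gen F x), by simp⟩

lemma exists_finite_extension_forall_aeval_ne_zero {F : Type u} [Field F] [Small.{v} F]
    {S : Set F[X]} (hS : S.Finite) :
    ∃ (K : Type v) (_ : Field K) (_ : Algebra F K), Module.Finite F K ∧
      ∃ θ : K, ∀ P ∈ S, P ≠ 0 → aeval θ P ≠ 0 := by
  obtain ⟨x, hx⟩ := exists_forall_aeval_ne_zero (E := AlgebraicClosure F) hS
  obtain ⟨K, _, _, hfin, f, θ, rfl⟩ :=
    exists_finite_extension_mem_range.{u, v} (Algebra.IsIntegral.isIntegral (R := F) x)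
  refine ⟨K, _, _, hfin, θ, fun P hP hP0 hroot => hx P hP hP0 ?_⟩
  exact (aeval_algHom_apply f θ P).trans (by rw [hroot, map_zero])

end Extension

section BlockToeplitz

lemma blockToeplitz_map {R S G : Type*} [Zero R] [Zero S] [FunLike G R S] [ZeroHomClass G R S]
    {p q : ℕ} (f : G) (Fb : ℕ → Matrix (Fin p) (Fin q) R) (j : ℕ) :
    (blockToeplitz Fb j).map f = blockToeplitz (fun d => (Fb d).map f) j := by
  ext i c
  simp only [blockToeplitz, Matrix.map_apply, Matrix.of_apply, apply_ite f, map_zero]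

lemma divNat_le_divNat_of_indexCond {p q m m' r : ℕ} {ρ : Fin r → Fin (m * p)}
    {σ : Fin r → Fin (m' * q)} (h : indexCond p q ρ σ) (t : Fin r) :
    ((σ t).divNat : ℕ) ≤ (ρ t).divNat := by
  have hp : 0 < p := (ρ t).modNat.pos
  have hceil : ((ρ t : ℕ) + 1 + p - 1) / p = (ρ t : ℕ) / p + 1 := by
    rw [Nat.add_right_comm, Nat.add_sub_cancel, Nat.add_div_right _ hp]
  have hlt : (σ t : ℕ) < ((ρ t : ℕ) / p + 1) * q := hceil ▸ h t
  exact Nat.lt_succ_iff.1 (Nat.div_lt_of_lt_mul (hlt.trans_eq (mul_comm _ _)))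

/-- The position of an index once consecutive blocks, of size `p`, are moved to distance `n` from
each other. With a common `n`, this puts rows and columns, whose blocks have different sizes, on
the same scale. -/
def stretchedIndex (n : ℕ) {m p : ℕ} (i : Fin (m * p)) : ℤ :=
  (i.divNat : ℕ) * n + (i.modNat : ℕ)

lemma strictMono_stretchedIndex {n m p : ℕ} (hpn : p ≤ n) :
    StrictMono (stretchedIndex n (m := m) (p := p)) := by
  intro i i' hlt
  have hval : (i : ℕ) < i' := hlt
  have hi := Nat.div_add_mod (i : ℕ) p
  have hi' := Nat.div_add_mod (i' : ℕ) p
  have hmod : (i : ℕ) % p < p := i.modNat.isLt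
  simp only [stretchedIndex, Fin.coe_divNat, Fin.coe_modNat]
  norm_cast
  rcases (Nat.div_le_div_right hval.le : (i : ℕ) / p ≤ (i' : ℕ) / p).eq_or_lt with
    hblock | hblock
  · rw [hblock] at hi ⊢
    lia
  · calc (i : ℕ) / p * n + (i : ℕ) % p
        < ((i : ℕ) / p + 1) * n := by rw [add_one_mul]; lia
      _ ≤ (i' : ℕ) / p * n := Nat.mul_le_mul_right n hblock
      _ ≤ (i' : ℕ) / p * n + (i' : ℕ) % p := Nat.le_add_right _ _

/-- The `d`-th block of the block Toeplitz matrix of monomials to be specialised: the exponent at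
`(a, b)` is the squared distance between the stretched indices of a row with offset `a` and of a
column with offset `b` lying `d` blocks before it. -/
noncomputable def monomialBlock (R : Type*) [Semiring R] (n p q d : ℕ) :
    Matrix (Fin p) (Fin q) R[X] :=
  Matrix.of fun a b => X ^ ((d : ℤ) * n + (a : ℕ) - (b : ℕ)).natAbs ^ 2

lemma blockToeplitz_monomialBlock_apply (R : Type*) [Semiring R] (n : ℕ) {p q j : ℕ}
    (i : Fin ((j + 1) * p)) (c : Fin ((j + 1) * q)) :
    blockToeplitz (monomialBlock R n p q) j i c =
      if (c.divNat : ℕ) ≤ (i.divNat : ℕ) then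
        X ^ (stretchedIndex n i - stretchedIndex n c).natAbs ^ 2
      else 0 := by
  simp only [blockToeplitz, monomialBlock, Matrix.of_apply]
  refine if_ctx_congr Iff.rfl (fun h => ?_) fun _ => rfl
  rw [stretchedIndex, stretchedIndex, Nat.cast_sub h]
  congr 3
  ring

lemma det_submatrix_blockToeplitz_monomialBlock_ne_zero (R : Type*) [CommRing R] [Nontrivial R]
    {n p q j r : ℕ} (hp : p ≤ n) (hq : q ≤ n) {ρ : Fin r → Fin ((j + 1) * p)}
    {σ : Fin r → Fin ((j + 1) * q)} (hρ : StrictMono ρ) (hσ : StrictMono σ)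
    (hcond : indexCond p q ρ σ) :
    ((blockToeplitz (monomialBlock R n p q) j).submatrix ρ σ).det ≠ 0 := by
  refine det_ne_zero_of_X_pow_sub_sq ((strictMono_stretchedIndex hp).comp hρ)
    ((strictMono_stretchedIndex hq).comp hσ) _ (fun i c => ?_) fun i => ?_
  · rw [submatrix_apply, blockToeplitz_monomialBlock_apply]
    exact (ite_eq_or_eq _ _ _).symm
  · rw [submatrix_apply, blockToeplitz_monomialBlock_apply,
      if_pos (divNat_le_divNat_of_indexCond hcond i)]
    rfl

end BlockToeplitz

theorem stmt7_general {F : Type u} [Field F] [Small.{v} F] (p q j : ℕ) :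
    ∃ (K : Type v) (_ : Field K) (_ : Algebra F K), Module.Finite F K ∧
      ∃ Fb : ℕ → Matrix (Fin p) (Fin q) K,
        ∀ (r : ℕ) (ρ : Fin r → Fin ((j + 1) * p)) (σ : Fin r → Fin ((j + 1) * q)),
          StrictMono ρ → StrictMono σ → indexCond p q ρ σ →
          ((blockToeplitz Fb j).submatrix ρ σ).det ≠ 0 := by
  let T := blockToeplitz (monomialBlock F (max p q) p q) j
  obtain ⟨K, _, _, hfin, θ, hθ⟩ :=
    exists_finite_extension_forall_aeval_ne_zero.{u, v} (finite_minors T)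
  refine ⟨K, _, _, hfin, fun d => (monomialBlock F (max p q) p q d).map (aeval θ), ?_⟩
  intro r ρ σ hρ hσ hcond
  have hminor : (T.submatrix ρ σ).det ∈ minors T :=
    ⟨r, OrderEmbedding.ofStrictMono ρ hρ, OrderEmbedding.ofStrictMono σ hσ, rfl⟩
  have hne : (T.submatrix ρ σ).det ≠ 0 :=
    det_submatrix_blockToeplitz_monomialBlock_ne_zero F (le_max_left p q) (le_max_right p q)
      hρ hσ hcond
  rw [← blockToeplitz_map, submatrix_map, ← AlgHom.mapMatrix_apply, ← AlgHom.map_det]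
  exact hθ _ hminor hne

theorem stmt7 {F : Type*} [Field F] [Fintype F] (n k j : ℕ)
    (hk : 0 < k) (hkn : k < n) (hj : 0 < j) :
    ∃ (K : Type) (_ : Field K) (_ : Algebra F K), Module.Finite F K ∧
      ∃ Fb : ℕ → Matrix (Fin (n - k)) (Fin k) K,
        ∀ (r : ℕ) (ρ : Fin r → Fin ((j + 1) * (n - k))) (σ : Fin r → Fin ((j + 1) * k)),
          StrictMono ρ → StrictMono σ → indexCond (n - k) k ρ σ →
          ((blockToeplitz Fb j).submatrix ρ σ).det ≠ 0 :=
  stmt7_general (n - k) k j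
end

section
/- Let j, k, n be fixed positive integers with k < n, let F be a field, and let F_0, F_1, …, F_j ∈ F^{(n−k)×k} be such that every minor of the block Toeplitz matrix T_j satisfying the index condition is nonzero. Let δ be the smallest positive integer such that ⌊δ/k⌋ + ⌊δ/(n−k)⌋ ≥ j. Then the sequence can be extended to an infinite sequence F_0, F_1, F_2, … of matrices in F^{(n−k)×k} such that the infinite block Hankel matrix F = (F_{s+t−1})_{s,t ≥ 1} has rank δ; that is, sup over all positive integers x, y of the rank of the finite block Hankel matrix F_{x,y} := (F_{s+t−1})_{1 ≤ s ≤ x, 1 ≤ t ≤ y} equals δ. -/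
/-!
Write `p = n - k` and `q = k`, and number the rows of the infinite block Hankel matrix by
`a = 0, 1, 2, …`. Reversing the order of its block columns turns Hankel blocks into Toeplitz
blocks, so the hypothesis on `T_j` makes every square corner invertible that consists of the
leading `r ≤ w q` rows of the first `w` block columns and involves only `F_1, …, F_j`.

*Lower bound.* By minimality of `δ`, the leading `δ` rows have such a corner, so every extension
of the sequence has rank at least `δ`.

*Upper bound.* A row `a ≥ δ` has `w = j - ⌊a/p⌋` known blocks, and `w q ≤ δ` by the inequality
defining `δ`; inverting the corner with `w q` rows expands the known part of row `a` in the leading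
`δ` rows. Moving down by one block row moves left by one block column, so these expansions define a
linear system with `δ` states whose Markov parameters `C A^t B` begin with `F_1, …, F_j`. The Hankel
matrix of the Markov parameters factors through the state space, hence has rank at most `δ`.
-/

open Matrix

def hankelMat {F : Type*} {p q : ℕ} (G : ℕ → Matrix (Fin p) (Fin q) F)
    (x y : ℕ) : Matrix (Fin x × Fin p) (Fin y × Fin q) F :=
  Matrix.of fun s t => G ((s.1 : ℕ) + (t.1 : ℕ) + 1) s.2 t.2

section MarkovParameter

variable {R ι m n : Type*} [Fintype ι] [DecidableEq ι] {p q : ℕ}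

/-- The Markov parameters `D, C B, C A B, C A² B, …` of the discrete-time linear system
`x_{t+1} = A x_t + B u_t`, `y_t = C x_t + D u_t`; `ι` indexes the state space. -/
def markovParameter [Semiring R] (A : Matrix ι ι R) (B : Matrix ι n R) (C : Matrix m ι R)
    (D : Matrix m n R) : ℕ → Matrix m n R
  | 0 => D
  | t + 1 => C * (A ^ t * B)

lemma hankelMat_markovParameter [Semiring R] (A : Matrix ι ι R) (B : Matrix ι (Fin q) R)
    (C : Matrix (Fin p) ι R) (D : Matrix (Fin p) (Fin q) R) (x y : ℕ) :
    hankelMat (markovParameter A B C D) x y =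
      of (fun (s : Fin x × Fin p) i => (C * A ^ (s.1 : ℕ)) s.2 i) *
        of fun i (t : Fin y × Fin q) => (A ^ (t.1 : ℕ) * B) i t.2 := by
  ext s t
  rw [hankelMat, of_apply, markovParameter, pow_add, Matrix.mul_assoc, ← Matrix.mul_assoc C]
  rfl

lemma rank_hankelMat_markovParameter_le [CommSemiring R] [StrongRankCondition R]
    (A : Matrix ι ι R) (B : Matrix ι (Fin q) R) (C : Matrix (Fin p) ι R)
    (D : Matrix (Fin p) (Fin q) R) (x y : ℕ) :
    (hankelMat (markovParameter A B C D) x y).rank ≤ Fintype.card ι := by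
  rw [hankelMat_markovParameter]
  exact (rank_mul_le_left _ _).trans (rank_le_card_width _)

end MarkovParameter

section HankelRow

variable {R : Type*} {p q : ℕ} [NeZero p]

/-- Block `y` (counted from `0`) of row `a` (counted from `0` through all block rows) of the
infinite block Hankel matrix `(G_{s+t-1})_{s,t ≥ 1}`. -/
def hankelRow (G : ℕ → Matrix (Fin p) (Fin q) R) (a y : ℕ) : Fin q → R :=
  (G (a / p + y + 1)).row (Fin.ofNat p a)

lemma hankelRow_add (G : ℕ → Matrix (Fin p) (Fin q) R) (a y : ℕ) :
    hankelRow G (a + p) y = hankelRow G a (y + 1) := by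
  have hmod : Fin.ofNat p (a + p) = Fin.ofNat p a := Fin.ext (Nat.add_mod_right a p)
  rw [hankelRow, hankelRow, Nat.add_div_right a (NeZero.pos p), hmod]
  congr 1
  ring_nf

lemma hankelRow_val (G : ℕ → Matrix (Fin p) (Fin q) R) (i : Fin p) (y : ℕ) :
    hankelRow G i y = (G (y + 1)).row i := by
  rw [hankelRow, Nat.div_eq_of_lt i.2, zero_add, Fin.ofNat_val_eq_self]

/-- The leading `δ` rows of block column `y` (counted from `0`) of the infinite block Hankel matrix
`(G_{s+t-1})_{s,t ≥ 1}`. -/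
def hankelBlockCol (G : ℕ → Matrix (Fin p) (Fin q) R) (δ y : ℕ) : Matrix (Fin δ) (Fin q) R :=
  of fun m => hankelRow G m y

/-- The square corner of the infinite block Hankel matrix formed by its leading `r` rows and by the
first `r` columns of its first `w` block columns, after the order of these block columns has been
reversed. The reversal makes it a submatrix of the block Toeplitz matrix. -/
def hankelCorner (G : ℕ → Matrix (Fin p) (Fin q) R) {r w : ℕ} (h : r ≤ w * q) :
    Matrix (Fin r) (Fin r) R :=
  of fun a b => hankelRow G a (Fin.castLE h b).divNat.rev (Fin.castLE h b).modNat

lemma div_add_le_of_lt {a r w j : ℕ} (ha : a < r) (hr : w * p + r ≤ (j + 1) * p) :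
    a / p + w ≤ j := by
  rw [← Nat.add_mul_div_right a w (NeZero.pos p), ← Nat.lt_succ_iff,
    Nat.div_lt_iff_lt_mul (NeZero.pos p)]
  lia

lemma hankelCorner_congr {G H : ℕ → Matrix (Fin p) (Fin q) R} {j r w : ℕ}
    (hGH : ∀ i ≤ j, G i = H i) (h : r ≤ w * q) (hr : w * p + r ≤ (j + 1) * p) :
    hankelCorner G h = hankelCorner H h := by
  ext a b
  have hblock := div_add_le_of_lt a.2 hr
  have hrev := (Fin.castLE h b).divNat.rev.2
  rw [hankelCorner, hankelCorner, of_apply, of_apply, hankelRow, hankelRow, hGH _ (by lia)]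

lemma exists_submatrix_blockToeplitz_eq_hankelCorner [Zero R]
    (G : ℕ → Matrix (Fin p) (Fin q) R) {j r w : ℕ} (h : r ≤ w * q)
    (hr : w * p + r ≤ (j + 1) * p) :
    ∃ (ρ : Fin r → Fin ((j + 1) * p)) (σ : Fin r → Fin ((j + 1) * q)),
      StrictMono ρ ∧ StrictMono σ ∧ indexCond p q ρ σ ∧
        (blockToeplitz G j).submatrix ρ σ = hankelCorner G h := by
  have hp : 0 < p := NeZero.pos p
  have hcol (b : Fin r) : (b : ℕ) < (j + 1) * q := by
    have hblock : b / p + w ≤ j := div_add_le_of_lt b.2 hr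
    have hw : w ≤ j + 1 := by lia
    exact b.2.trans_le (h.trans (Nat.mul_le_mul_right q hw))
  refine ⟨fun a => ⟨w * p + a, by omega⟩, fun b => ⟨b, hcol b⟩,
    fun a b hab => Nat.add_lt_add_left hab _, fun a b hab => hab, fun t => ?_, ?_⟩
  · have hceil : w ≤ (w * p + t + 1 + p - 1) / p := by
      rw [Nat.le_div_iff_mul_le hp]
      omega
    exact (Nat.succ_le_of_lt (t.2.trans_le h)).trans (Nat.mul_le_mul_right q hceil)
  · ext a b
    have hdiv : (w * p + a) / p = w + a / p := by rw [mul_comm, Nat.mul_add_div hp]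
    have hmod : (w * p + a) % p = a % p := by rw [mul_comm, Nat.mul_add_mod]
    have hb : (b : ℕ) / q < w := (Fin.castLE h b).divNat.2
    have hindex (x : ℕ) : w + x - b / q = x + (w - (b / q + 1)) + 1 := by omega
    simp only [blockToeplitz, hankelCorner, hankelRow, submatrix_apply, of_apply, Fin.coe_divNat,
      Fin.val_rev, Fin.val_castLE, Fin.modNat, row_apply, hdiv, hmod, hindex]
    exact if_pos (by lia)

lemma isUnit_hankelCorner {F : Type*} [Field F] {G : ℕ → Matrix (Fin p) (Fin q) F} {j : ℕ}
    (hminors : ∀ (r : ℕ) (ρ : Fin r → Fin ((j + 1) * p)) (σ : Fin r → Fin ((j + 1) * q)),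
      StrictMono ρ → StrictMono σ → indexCond p q ρ σ →
      ((blockToeplitz G j).submatrix ρ σ).det ≠ 0)
    {r w : ℕ} (h : r ≤ w * q) (hr : w * p + r ≤ (j + 1) * p) : IsUnit (hankelCorner G h) := by
  obtain ⟨ρ, σ, hρ, hσ, hindex, heq⟩ := exists_submatrix_blockToeplitz_eq_hankelCorner G h hr
  rw [← heq, isUnit_iff_isUnit_det]
  exact (hminors r ρ σ hρ hσ hindex).isUnit

lemma le_rank_hankelMat [CommSemiring R] [StrongRankCondition R]
    {G : ℕ → Matrix (Fin p) (Fin q) R} {r w x y : ℕ} {h : r ≤ w * q}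
    (hunit : IsUnit (hankelCorner G h)) (hx : r ≤ x * p) (hy : w ≤ y) :
    r ≤ (hankelMat G x y).rank := by
  have hrow (a : Fin r) : (a : ℕ) / p < x :=
    (Nat.div_lt_iff_lt_mul (NeZero.pos p)).2 (a.2.trans_le hx)
  have hsub : hankelCorner G h = (hankelMat G x y).submatrix
      (fun a : Fin r => (⟨a / p, hrow a⟩, Fin.ofNat p a))
      (fun b => (Fin.castLE hy (Fin.castLE h b).divNat.rev, (Fin.castLE h b).modNat)) := rfl
  calc r = (hankelCorner G h).rank := by rw [rank_of_isUnit _ hunit, Fintype.card_fin]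
    _ ≤ (hankelMat G x y).rank := hsub ▸ rank_submatrix_le _ _ _

end HankelRow

section RowExpansion

variable {R : Type*} [Semiring R] {p q : ℕ} [NeZero p] {δ : ℕ}

/-- `α` expands the part of row `a` of the block Hankel matrix of `G` that involves only
`G 1, …, G j` in the leading `δ` rows. Rows after row `a` do not occur, because they may have fewer
such blocks. -/
structure IsRowExpansion (G : ℕ → Matrix (Fin p) (Fin q) R) (j a : ℕ) (α : Fin δ → R) : Prop where
  eq_zero_of_lt : ∀ m : Fin δ, a < m → α m = 0
  vecMul_eq : ∀ y, a / p + y < j → α ᵥ* hankelBlockCol G δ y = hankelRow G a y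

lemma isRowExpansion_single (G : ℕ → Matrix (Fin p) (Fin q) R) (j : ℕ) (a : Fin δ) :
    IsRowExpansion G j a (Pi.single a 1 : Fin δ → R) where
  eq_zero_of_lt _ hm := Pi.single_eq_of_ne (Fin.ne_of_gt hm) _
  vecMul_eq _ _ := single_one_vecMul _ _

lemma exists_vecMul_hankelRow_eq {G : ℕ → Matrix (Fin p) (Fin q) R} {w : ℕ}
    (hunit : IsUnit (hankelCorner G (le_refl (w * q)))) (a : ℕ) :
    ∃ u : Fin (w * q) → R, ∀ y < w,
      u ᵥ* hankelBlockCol G (w * q) y = hankelRow G a y := by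
  let v : Fin (w * q) → R := fun b => hankelRow G a b.divNat.rev b.modNat
  obtain ⟨N, -, hN⟩ := isUnit_iff_exists.1 hunit
  have hv : (v ᵥ* N) ᵥ* hankelCorner G (le_refl (w * q)) = v := by
    rw [vecMul_vecMul, hN, vecMul_one]
  refine ⟨v ᵥ* N, fun y hy => funext fun c => ?_⟩
  -- Column `c` of block `y` stands in block `y.rev` of the corner.
  have hcol := congrFun hv (Fin.mkDivMod (Fin.rev ⟨y, hy⟩) c)
  simpa only [v, hankelCorner, hankelBlockCol, vecMul, dotProduct, of_apply, Fin.castLE_rfl, id_eq,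
    Fin.divNat_mkDivMod, Fin.modNat_mkDivMod, Fin.rev_rev] using hcol

lemma vecMul_extend_zero {l m n : Type*} [Fintype l] [Fintype m] {e : l → m}
    (he : Function.Injective e) (u : l → R) (M : Matrix m n R) :
    Function.extend e u 0 ᵥ* M = u ᵥ* M.submatrix e id := by
  ext c
  refine (Fintype.sum_of_injective e he _ _ (fun i hi => ?_) fun i => ?_).symm
  · rw [Function.extend_apply' _ _ _ hi, Pi.zero_apply, zero_mul]
  · simp only [he.extend_apply, submatrix_apply, id]

lemma isRowExpansion_extend_zero {G : ℕ → Matrix (Fin p) (Fin q) R} {j a r : ℕ} (hr : r ≤ δ)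
    (ha : δ ≤ a) {u : Fin r → R} (hu : ∀ y < j - a / p,
      u ᵥ* hankelBlockCol G r y = hankelRow G a y) :
    IsRowExpansion G j a (Function.extend (Fin.castLE hr) u 0) where
  eq_zero_of_lt m hm := absurd m.2 (by omega)
  vecMul_eq y hy := by
    rw [vecMul_extend_zero (Fin.castLE_injective hr)]
    exact hu y (by omega)

lemma IsRowExpansion.vecMul_congr {G : ℕ → Matrix (Fin p) (Fin q) R} {j a : ℕ} {α : Fin δ → R}
    (hα : IsRowExpansion G j a α) {n : Type*} {X Y : Matrix (Fin δ) n R}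
    (hXY : ∀ m : Fin δ, m ≤ a → X.row m = Y.row m) : α ᵥ* X = α ᵥ* Y := by
  ext c
  simp only [vecMul, dotProduct]
  refine Finset.sum_congr rfl fun m _ => ?_
  rcases le_or_gt (m : ℕ) a with hm | hm
  · exact congrArg (α m * ·) (congrFun (hXY m hm) c)
  · simp only [hα.eq_zero_of_lt m hm, zero_mul]

lemma row_pow_mul_hankelBlockCol {G : ℕ → Matrix (Fin p) (Fin q) R} {j : ℕ} {α : ℕ → Fin δ → R}
    (hα : ∀ a, IsRowExpansion G j a (α a)) (y : ℕ) (m : Fin δ) (hm : m / p + y < j) :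
    ((of fun m : Fin δ => α (m + p)) ^ y * hankelBlockCol G δ 0).row m = hankelRow G m y := by
  induction y generalizing m with
  | zero => rw [pow_zero, Matrix.one_mul]; rfl
  | succ y ih =>
    let A : Matrix (Fin δ) (Fin δ) R := of fun m => α (m + p)
    have hdiv : (m + p) / p = m / p + 1 := Nat.add_div_right _ (NeZero.pos p)
    have hstep (m' : Fin δ) (hm' : m' ≤ (m + p : ℕ)) :
        (A ^ y * hankelBlockCol G δ 0).row m' = (hankelBlockCol G δ y).row m' := by
      have hle : m' / p ≤ (m + p) / p := Nat.div_le_div_right hm'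
      exact ih m' (by lia)
    calc (A ^ (y + 1) * hankelBlockCol G δ 0).row m
        = α (m + p) ᵥ* (A ^ y * hankelBlockCol G δ 0) := by
          rw [pow_succ', Matrix.mul_assoc]; rfl
      _ = α (m + p) ᵥ* hankelBlockCol G δ y := (hα (m + p)).vecMul_congr hstep
      _ = hankelRow G (m + p) y := (hα (m + p)).vecMul_eq y (by lia)
      _ = hankelRow G m (y + 1) := hankelRow_add G m y

lemma exists_markovParameter_eq {G : ℕ → Matrix (Fin p) (Fin q) R} {j : ℕ}
    (hG : ∀ a, ∃ α : Fin δ → R, IsRowExpansion G j a α) :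
    ∃ (A : Matrix (Fin δ) (Fin δ) R) (B : Matrix (Fin δ) (Fin q) R) (C : Matrix (Fin p) (Fin δ) R),
      ∀ i ≤ j, markovParameter A B C (G 0) i = G i := by
  choose α hα using hG
  let A : Matrix (Fin δ) (Fin δ) R := of fun m => α (m + p)
  refine ⟨A, hankelBlockCol G δ 0, of fun i => α i, ?_⟩
  rintro (_ | t) ht
  · rfl
  · funext i
    have hi : i / p = 0 := Nat.div_eq_of_lt i.2
    have hpow (m : Fin δ) (hm : m ≤ (i : ℕ)) :
        (A ^ t * hankelBlockCol G δ 0).row m = (hankelBlockCol G δ t).row m := by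
      have hle : m / p ≤ i / p := Nat.div_le_div_right hm
      exact row_pow_mul_hankelBlockCol hα t m (by lia)
    calc α i ᵥ* (A ^ t * hankelBlockCol G δ 0)
        = α i ᵥ* hankelBlockCol G δ t := (hα i).vecMul_congr hpow
      _ = hankelRow G i t := (hα i).vecMul_eq t (by lia)
      _ = (G (t + 1)).row i := hankelRow_val G i t

end RowExpansion

section Extension

variable {R : Type*} {p q j δ : ℕ}

lemma sub_div_mul_le_of_le_div_add_div {a : ℕ} (hδ : j ≤ δ / q + δ / p) (ha : δ ≤ a) :
    (j - a / p) * q ≤ δ := by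
  have hle : δ / p ≤ a / p := Nat.div_le_div_right ha
  calc (j - a / p) * q ≤ δ / q * q := Nat.mul_le_mul_right q (by lia)
    _ ≤ δ := Nat.div_mul_le_self δ q

lemma sub_div_mul_add_le [NeZero p] {a r : ℕ} (hj : a / p ≤ j) (hr : r ≤ a + 1) :
    (j - a / p) * p + r ≤ (j + 1) * p := by
  have hlt : a < a / p * p + p := Nat.lt_div_mul_add (NeZero.pos p)
  calc (j - a / p) * p + r ≤ (j - a / p) * p + (a / p * p + p) := by lia
    _ = (j + 1) * p := by rw [← add_assoc, ← add_mul, Nat.sub_add_cancel hj, add_one_mul]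

lemma exists_isRowExpansion [NeZero p] [Semiring R] {G : ℕ → Matrix (Fin p) (Fin q) R}
    (hG : ∀ (r w : ℕ) (h : r ≤ w * q), w * p + r ≤ (j + 1) * p → IsUnit (hankelCorner G h))
    (hδ : j ≤ δ / q + δ / p) (a : ℕ) : ∃ α : Fin δ → R, IsRowExpansion G j a α := by
  rcases lt_or_ge a δ with ha | ha
  · exact ⟨_, isRowExpansion_single G j ⟨a, ha⟩⟩
  · have hr := sub_div_mul_le_of_le_div_add_div hδ ha
    have hknown : (j - a / p) * p + (j - a / p) * q ≤ (j + 1) * p := by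
      rcases le_total j (a / p) with hj | hj
      · simp [Nat.sub_eq_zero_of_le hj]
      · exact sub_div_mul_add_le hj (by lia)
    obtain ⟨u, hu⟩ := exists_vecMul_hankelRow_eq (hG _ _ le_rfl hknown) a
    exact ⟨_, isRowExpansion_extend_zero hr ha hu⟩

lemma exists_le_mul_of_isLeast [NeZero p] [NeZero q] (hδ : IsLeast {d | j ≤ d / q + d / p} δ) :
    ∃ w ≤ j, δ ≤ w * q ∧ w * p + δ ≤ (j + 1) * p := by
  rcases δ.eq_zero_or_pos with rfl | hpos
  · exact ⟨0, by simp⟩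
  · have hlt : (δ - 1) / q + (δ - 1) / p < j := by
      by_contra! hle
      have hpred : δ ≤ δ - 1 := hδ.2 hle
      omega
    have hmul : δ - 1 < (j - (δ - 1) / p) * q :=
      (Nat.div_lt_iff_lt_mul (NeZero.pos q)).1 (by lia)
    exact ⟨j - (δ - 1) / p, Nat.sub_le _ _, by lia, sub_div_mul_add_le (by lia) (by lia)⟩

theorem stmt9_general [NeZero p] [NeZero q] [CommSemiring R] [StrongRankCondition R]
    {Fb : ℕ → Matrix (Fin p) (Fin q) R}
    (hFb : ∀ (r w : ℕ) (h : r ≤ w * q), w * p + r ≤ (j + 1) * p → IsUnit (hankelCorner Fb h))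
    (hδ : IsLeast {d | j ≤ d / q + d / p} δ) :
    ∃ G : ℕ → Matrix (Fin p) (Fin q) R,
      (∀ i ≤ j, G i = Fb i) ∧
      (⨆ x : ℕ, ⨆ y : ℕ, ((hankelMat G (x + 1) (y + 1)).rank : ℕ∞)) = (δ : ℕ∞) := by
  obtain ⟨A, B, C, hG⟩ := exists_markovParameter_eq (exists_isRowExpansion hFb hδ.1)
  refine ⟨markovParameter A B C (Fb 0), hG, le_antisymm (iSup₂_le fun x y => ?_) ?_⟩
  · simpa using rank_hankelMat_markovParameter_le A B C (Fb 0) (x + 1) (y + 1)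
  · obtain ⟨w, hwj, hwq, hwp⟩ := exists_le_mul_of_isLeast hδ
    have hunit := hankelCorner_congr hG hwq hwp ▸ hFb δ w hwq hwp
    have hrank := le_rank_hankelMat hunit (x := j + 1) (y := j + 1) (by omega) (by omega)
    exact le_iSup₂_of_le j j (mod_cast hrank)

end Extension

theorem stmt9 {F : Type*} [Field F] (n k j : ℕ) (hk : 0 < k) (hkn : k < n) (hj : 0 < j)
    (Fb : ℕ → Matrix (Fin (n - k)) (Fin k) F)
    (hminors : ∀ (r : ℕ) (ρ : Fin r → Fin ((j + 1) * (n - k))) (σ : Fin r → Fin ((j + 1) * k)),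
      StrictMono ρ → StrictMono σ → indexCond (n - k) k ρ σ →
      ((blockToeplitz Fb j).submatrix ρ σ).det ≠ 0)
    (δ : ℕ) (hpos : 0 < δ) (hge : j ≤ δ / k + δ / (n - k))
    (hmin : ∀ d : ℕ, 0 < d → j ≤ d / k + d / (n - k) → δ ≤ d) :
    ∃ G : ℕ → Matrix (Fin (n - k)) (Fin k) F,
      (∀ i ≤ j, G i = Fb i) ∧
      (⨆ x : ℕ, ⨆ y : ℕ, ((hankelMat G (x + 1) (y + 1)).rank : ℕ∞)) = (δ : ℕ∞) := by
  have : NeZero k := ⟨hk.ne'⟩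
  have : NeZero (n - k) := ⟨(Nat.sub_pos_of_lt hkn).ne'⟩
  have hd (d : ℕ) (h : j ≤ d / k + d / (n - k)) : 0 < d :=
    Nat.pos_of_ne_zero fun h0 => by simp [h0] at h; omega
  exact stmt9_general (fun _ _ => isUnit_hankelCorner hminors) ⟨hge, fun d h => hmin d (hd d h) h⟩
end
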